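/- Let Ω ⊂ ℝⁿ (n ≥ 2) be a bounded polyhedral domain with singular set S ≠ ∅ and η(x) = dist(x, S). Then there exists a constant κ > 0 such that for every function u : ℝⁿ → ℝ that is twice continuously differentiable on an open neighborhood of the closure of Ω and vanishes on ∂Ω, one has ∫_Ω u(x)²/η(x)² dx + ∫_Ω ‖∇u(x)‖² dx ≤ κ ∫_Ω η(x)² (Δu(x))² dx (an inequality in the extended nonnegative reals). -/

import Mathlib

open MeasureTheory Set Metric
open scoped RealInnerProductSpace ENNReal

noncomputable section

/-- `H` is an affine hyperplane in `ℝⁿ`. -/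
def IsAffineHyperplane {n : ℕ} (H : Set (EuclideanSpace ℝ (Fin n))) : Prop :=
  ∃ (v : EuclideanSpace ℝ (Fin n)) (c : ℝ), v ≠ 0 ∧ H = {x | ⟪v, x⟫ = c}

/-- `Ω` is a bounded polyhedral domain with boundary contained in the union of the minimal
finite family `𝓗` of affine hyperplanes. -/
structure IsPolyhedralDomain {n : ℕ} (Ω : Set (EuclideanSpace ℝ (Fin n)))
    (𝓗 : Finset (Set (EuclideanSpace ℝ (Fin n)))) : Prop where
  isOpen : IsOpen Ω
  isBounded : Bornology.IsBounded Ω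
  frontier_closure : frontier Ω = frontier (closure Ω)
  hyperplane : ∀ H ∈ 𝓗, IsAffineHyperplane H
  subset_union : frontier Ω ⊆ ⋃ H ∈ 𝓗, H
  minimal : ∀ 𝓗' ⊂ 𝓗, ¬ frontier Ω ⊆ ⋃ H ∈ 𝓗', H

/-- The set of singular boundary points: boundary points lying on at least two
distinct hyperplanes of the family `𝓗`. -/
def polySingularSet {n : ℕ} (Ω : Set (EuclideanSpace ℝ (Fin n)))
    (𝓗 : Finset (Set (EuclideanSpace ℝ (Fin n)))) : Set (EuclideanSpace ℝ (Fin n)) :=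
  {x | x ∈ frontier Ω ∧ ∃ H₁ ∈ 𝓗, ∃ H₂ ∈ 𝓗, H₁ ≠ H₂ ∧ x ∈ H₁ ∧ x ∈ H₂}

/-- The Laplace operator `Δu = ∑ⱼ ∂²u/∂xⱼ²`. -/
def laplaceOp {n : ℕ} (u : EuclideanSpace ℝ (Fin n) → ℝ) :
    EuclideanSpace ℝ (Fin n) → ℝ :=
  fun x => ∑ j : Fin n,
    fderiv ℝ (fun y => fderiv ℝ u y (EuclideanSpace.single j 1)) x (EuclideanSpace.single j 1)

/-!
The open chambers of the hyperplane arrangement that meet the complement of `closure Ω` are convex,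
miss `Ω`, and finitely many of them accumulate at every boundary point, so `infDist · S` dominates
the least of their distance functions. For one convex set `C` with a ball of radius `r` around `c`,
the distance `δ` to `C` satisfies `∂δ (x - c) ≥ δ + r`. Hence a weight `ϱ ≈ δ` grows radially fast
enough that integrating the divergence of `(v ^ 2 / ϱ) (x - c)` yields Hardy's inequality
`∫ (v / δ) ^ 2 ≤ K ∫ ‖∇v‖ ^ 2` on `Ω`. Summing over the sets gives the inequality for
`infDist · S`, and it is absorbed in the energy identity `∫ ‖∇u‖ ^ 2 = -∫ u Δu`, whose right-hand
side is split as `(u / η) (η Δu)`.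
-/

section Frontier

open scoped Topology

theorem inter_frontier_nonempty {X : Type*} [TopologicalSpace X] {s t : Set X}
    (ht : IsPreconnected t) (hs : (t ∩ s).Nonempty) (hsc : (t ∩ sᶜ).Nonempty) :
    (t ∩ frontier s).Nonempty := by
  by_contra hempty
  have hcover : t ⊆ interior s ∪ interior sᶜ := by
    rw [← compl_frontier_eq_union_interior]
    exact fun x hx hxs => hempty ⟨x, hx, hxs⟩
  obtain ⟨x, -, hx, hx'⟩ := ht _ _ isOpen_interior isOpen_interior hcover
    (hs.imp fun x hx => ⟨hx.1, (hcover hx.1).resolve_right fun h => interior_subset h hx.2⟩)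
    (hsc.imp fun x hx => ⟨hx.1, (hcover hx.1).resolve_left fun h => hx.2 (interior_subset h)⟩)
  exact interior_subset hx' (interior_subset hx)

variable {E : Type*} [NormedAddCommGroup E] [NormedSpace ℝ E] {f : E → ℝ} {s : Set E}

theorem lipschitzWith_indicator {K : NNReal} (hf : LipschitzWith K f)
    (hzero : ∀ x ∈ frontier s, f x = 0) : LipschitzWith K (s.indicator f) := by
  have hcross : ∀ x ∈ s, ∀ y ∉ s, |f x| ≤ K * dist x y := by
    intro x hx y hy
    obtain ⟨z, hz, hzs⟩ := inter_frontier_nonempty (convex_segment (𝕜 := ℝ) x y).isPreconnected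
      ⟨x, left_mem_segment ℝ x y, hx⟩ ⟨y, right_mem_segment ℝ x y, hy⟩
    calc |f x| = dist (f x) (f z) := by rw [hzero z hzs, Real.dist_0_eq_abs]
      _ ≤ K * dist x z := hf.dist_le_mul x z
      _ ≤ K * dist x y := by
        gcongr
        linarith [dist_add_dist_of_mem_segment hz, dist_nonneg (x := z) (y := y)]
  refine LipschitzWith.of_dist_le_mul fun x y => ?_
  by_cases hx : x ∈ s <;> by_cases hy : y ∈ s
  · simpa only [indicator_of_mem hx, indicator_of_mem hy] using hf.dist_le_mul x y
  · simpa only [indicator_of_mem hx, indicator_of_notMem hy, Real.dist_0_eq_abs]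
      using hcross x hx y hy
  · simpa only [indicator_of_notMem hx, indicator_of_mem hy, dist_comm x y, dist_zero_left,
      Real.norm_eq_abs] using hcross y hy x hx
  · simp only [indicator_of_notMem hx, indicator_of_notMem hy, dist_self]
    positivity

theorem fderiv_indicator_of_notMem_frontier (f : E → ℝ) {x : E} (hx : x ∉ frontier s) :
    fderiv ℝ (s.indicator f) x = s.indicator (fderiv ℝ f) x := by
  rw [← mem_compl_iff, compl_frontier_eq_union_interior] at hx
  rcases hx with hx | hx
  · rw [indicator_of_mem (interior_subset hx)]
    exact (eqOn_indicator.eventuallyEq_of_mem (mem_interior_iff_mem_nhds.1 hx)).fderiv_eq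
  · rw [indicator_of_notMem (interior_subset hx), (eqOn_indicator'.eventuallyEq_of_mem
      (mem_interior_iff_mem_nhds.1 hx)).fderiv_eq]
    exact fderiv_const_apply 0

end Frontier

section Extension

open scoped ContDiff Manifold

variable {E F : Type*} [NormedAddCommGroup E] [NormedSpace ℝ E] [FiniteDimensional ℝ E]
  [NormedAddCommGroup F] [NormedSpace ℝ F]

theorem exists_contDiff_hasCompactSupport_eqOn {k : ℕ∞} {K U : Set E} (hK : IsCompact K)
    (hU : IsOpen U) (hKU : K ⊆ U) {u : E → F} (hu : ContDiffOn ℝ k u U) :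
    ∃ w : E → F, ContDiff ℝ k w ∧ HasCompactSupport w ∧ EqOn w u K := by
  obtain ⟨L, hL, hKL, hLU⟩ := exists_compact_between hK hU hKU
  obtain ⟨χ, hχ, -, hχL, hχK⟩ := exists_contMDiff_support_eq_eq_one_iff (n := k) 𝓘(ℝ, E)
    isOpen_interior hK.isClosed hKL
  have hsupport : tsupport χ ⊆ L := by
    rw [tsupport, hχL]
    exact closure_minimal interior_subset hL.isClosed
  have hcompact : HasCompactSupport χ := hL.of_isClosed_subset (isClosed_tsupport χ) hsupport
  refine ⟨fun x => χ x • u x, contDiff_iff_contDiffAt.2 fun x => ?_, hcompact.smul_right,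
    fun x hx => by simp only [(hχK x).1 hx, one_smul]⟩
  by_cases hx : x ∈ tsupport χ
  · exact hχ.contDiff.contDiffAt.smul
      (hu.contDiffAt (hU.mem_nhds (hLU (hsupport hx))))
  · refine contDiffAt_const (c := 0) |>.congr_of_eventuallyEq ?_
    filter_upwards [notMem_tsupport_iff_eventuallyEq.1 hx] with y hy
    rw [hy, Pi.zero_apply, zero_smul]

end Extension

section Quotient

theorem pos_of_abs_le_mul {a b c : ℝ} (hc : 0 ≤ c) (h : |a| ≤ c * b) (ha : a ≠ 0) : 0 < b :=
  pos_of_mul_pos_right ((abs_pos.2 ha).trans_le h) hc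

theorem abs_div_le_of_abs_le_mul {a b c : ℝ} (hc : 0 ≤ c) (h : |a| ≤ c * b) : |a / b| ≤ c := by
  rcases eq_or_ne a 0 with rfl | ha
  · simpa only [zero_div, abs_zero] using hc
  · have hb : 0 < b := pos_of_abs_le_mul hc h ha
    rwa [abs_div, abs_of_pos hb, div_le_iff₀ hb]

theorem lipschitzWith_sq_div {X : Type*} [PseudoMetricSpace X] {f g : X → ℝ} {Kf Kg M : NNReal}
    (hf : LipschitzWith Kf f) (hg : LipschitzOnWith Kg g (Function.support f))
    (hle : ∀ x, |f x| ≤ M * g x) :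
    LipschitzWith (2 * M * Kf + M ^ 2 * Kg) fun x => f x ^ 2 / g x := by
  have hquot : ∀ x, |f x / g x| ≤ M := fun x => abs_div_le_of_abs_le_mul M.2 (hle x)
  have hcancel : ∀ x, f x / g x * g x = f x := fun x =>
    div_mul_cancel_of_imp fun h => abs_nonpos_iff.1 ((hle x).trans_eq (by rw [h, mul_zero]))
  have hprod : ∀ x y, |f x / g x * (f y / g y) * (g y - g x)| ≤ M ^ 2 * (Kg * dist x y) := by
    intro x y
    by_cases hxy : f x = 0 ∨ f y = 0
    · have : f x / g x * (f y / g y) = 0 := by rcases hxy with h | h <;> simp [h]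
      rw [this, zero_mul, abs_zero]
      positivity
    · obtain ⟨hx, hy⟩ := not_or.1 hxy
      rw [abs_mul, abs_mul, sq]
      gcongr
      · exact hquot x
      · exact hquot y
      · simpa only [Real.dist_eq, dist_comm x y] using hg.dist_le_mul y hy x hx
  refine LipschitzWith.of_dist_le_mul fun x y => ?_
  have hsplit : f x ^ 2 / g x - f y ^ 2 / g y =
      (f x / g x + f y / g y) * (f x - f y) + f x / g x * (f y / g y) * (g y - g x) := by
    linear_combination (f y / g y) * hcancel x - (f x / g x) * hcancel y
  calc dist (f x ^ 2 / g x) (f y ^ 2 / g y)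
      ≤ |(f x / g x + f y / g y) * (f x - f y)| + |f x / g x * (f y / g y) * (g y - g x)| := by
        rw [Real.dist_eq, hsplit]
        exact abs_add_le _ _
    _ ≤ (M + M) * (Kf * dist x y) + M ^ 2 * (Kg * dist x y) := by
        rw [abs_mul]
        gcongr
        · exact (abs_add_le _ _).trans (add_le_add (hquot x) (hquot y))
        · exact hf.dist_le_mul x y
        · exact hprod x y
    _ = (2 * M * Kf + M ^ 2 * Kg : NNReal) * dist x y := by push_cast; ring

theorem memLp_div {X : Type*} [TopologicalSpace X] [MeasurableSpace X] [OpensMeasurableSpace X]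
    {μ : Measure X} [IsFiniteMeasureOnCompacts μ] {f g : X → ℝ} {M : NNReal} {p : ℝ≥0∞}
    (hf : Continuous f) (hcompact : HasCompactSupport f) (hg : Measurable g)
    (hle : ∀ x, |f x| ≤ M * g x) : MemLp (fun x => f x / g x) p μ :=
  (hcompact.mono fun x hx h => hx (by simp only [h, zero_div])).memLp_of_bound
    (hf.measurable.div hg).aestronglyMeasurable M
    (.of_forall fun x => abs_div_le_of_abs_le_mul M.2 (hle x))

theorem abs_le_mul_infDist {X : Type*} [PseudoMetricSpace X] {f : X → ℝ} {K : NNReal} {s : Set X}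
    (hf : LipschitzWith K f) (hs : s.Nonempty) (hdisj : Disjoint (Function.support f) s) (x : X) :
    |f x| ≤ K * infDist x s := by
  have := hs.to_subtype
  rw [infDist_eq_iInf, Real.mul_iInf_of_nonneg K.coe_nonneg]
  refine le_ciInf fun y => ?_
  have hy : f y = 0 := Function.notMem_support.1 fun h => disjoint_left.1 hdisj h y.2
  simpa only [hy, Real.dist_0_eq_abs] using hf.dist_le_mul x y

theorem memLp_div_infDist {X : Type*} [PseudoMetricSpace X] [MeasurableSpace X]
    [OpensMeasurableSpace X] {μ : Measure X} [IsFiniteMeasureOnCompacts μ] {f : X → ℝ} {K : NNReal}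
    {s : Set X} {p : ℝ≥0∞} (hf : LipschitzWith K f) (hcompact : HasCompactSupport f)
    (hs : s.Nonempty) (hdisj : Disjoint (Function.support f) s) :
    MemLp (fun x => f x / infDist x s) p μ :=
  memLp_div hf.continuous hcompact measurable_infDist (abs_le_mul_infDist hf hs hdisj)

end Quotient

section IntegrationByParts

variable {E : Type*} [NormedAddCommGroup E] [NormedSpace ℝ E] [FiniteDimensional ℝ E]
  [MeasurableSpace E] [BorelSpace E] {μ : Measure E}

theorem memLp_fderiv [IsFiniteMeasureOnCompacts μ] {g : E → ℝ} {K : NNReal} {p : ℝ≥0∞}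
    (hg : LipschitzWith K g) (hcompact : HasCompactSupport g) : MemLp (fderiv ℝ g) p μ :=
  (hcompact.fderiv ℝ).memLp_of_bound (measurable_fderiv ℝ g).aestronglyMeasurable K
    (.of_forall fun _ => norm_fderiv_le_of_lipschitz ℝ hg)

theorem memLp_fderiv_apply [IsFiniteMeasureOnCompacts μ] {g : E → ℝ} {K : NNReal} {h : E → E}
    {p : ℝ≥0∞} (hg : LipschitzWith K g) (hcompact : HasCompactSupport g) (hh : Continuous h) :
    MemLp (fun x => fderiv ℝ g x (h x)) p μ := by
  obtain ⟨R, hR⟩ := hcompact.isCompact.exists_bound_of_continuousOn hh.continuousOn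
  refine (memLp_fderiv hg hcompact).of_le_mul (c := R)
    (isBoundedBilinearMap_apply.continuous.comp_aestronglyMeasurable₂
      (measurable_fderiv ℝ g).aestronglyMeasurable hh.aestronglyMeasurable) (.of_forall fun x => ?_)
  by_cases hx : x ∈ tsupport g
  · rw [mul_comm]
    exact (fderiv ℝ g x).le_opNorm_of_le (hR x hx)
  · rw [fderiv_of_notMem_tsupport ℝ hx, zero_apply, norm_zero, norm_zero, mul_zero]

variable [μ.IsAddHaarMeasure]

theorem integral_mul_fderiv_apply {f g : E → ℝ} {Kf Kg : NNReal} (hf : LipschitzWith Kf f)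
    (hg : LipschitzWith Kg g) (hcompact : HasCompactSupport g) (v : E) :
    ∫ x, f x * fderiv ℝ g x v ∂μ = -∫ x, fderiv ℝ f x v * g x ∂μ := by
  have hfderiv : (fun x => fderiv ℝ f x v * g x) =ᵐ[μ] fun x => lineDeriv ℝ f x v * g x := by
    filter_upwards [hf.ae_differentiableAt] with x hx
    rw [hx.lineDeriv_eq_fderiv]
  have hgderiv : (fun x => lineDeriv ℝ g x (-v) * f x) =ᵐ[μ] fun x => -(f x * fderiv ℝ g x v) := by
    filter_upwards [hg.ae_differentiableAt] with x hx
    rw [hx.lineDeriv_eq_fderiv, map_neg, neg_mul, mul_comm]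
  rw [integral_congr_ae hfderiv, hf.integral_lineDeriv_mul_eq hg hcompact,
    integral_congr_ae hgderiv, integral_neg, neg_neg]

theorem integral_fderiv_apply_sub {W : E → ℝ} {K : NNReal} (hW : LipschitzWith K W)
    (hcompact : HasCompactSupport W) (c : E) :
    ∫ x, fderiv ℝ W x (x - c) ∂μ = -(Module.finrank ℝ E * ∫ x, W x ∂μ) := by
  let b := Module.finBasis ℝ E
  let ℓ : Fin (Module.finrank ℝ E) → E →L[ℝ] ℝ := fun i => (b.coord i).toContinuousLinearMap
  have hlip : ∀ i, LipschitzWith ‖ℓ i‖₊ fun x => ℓ i (x - c) := fun i =>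
    LipschitzWith.of_dist_le_mul fun x y => by
      simpa only [dist_sub_right] using (ℓ i).lipschitz.dist_le_mul (x - c) (y - c)
  have hcoord : ∀ i, ∫ x, ℓ i (x - c) * fderiv ℝ W x (b i) ∂μ = -∫ x, W x ∂μ := fun i => by
    have hderiv : ∀ x, fderiv ℝ (fun y => ℓ i (y - c)) x (b i) = 1 := fun x => by
      rw [fderiv_comp_sub (f := ℓ i), (ℓ i).fderiv]
      simp [ℓ]
    simp only [integral_mul_fderiv_apply (hlip i) hW hcompact, hderiv, one_mul]
  have hexpand : ∀ x, fderiv ℝ W x (x - c) = ∑ i, ℓ i (x - c) * fderiv ℝ W x (b i) := fun x => by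
    conv_lhs => rw [← b.sum_repr (x - c), map_sum]
    exact Finset.sum_congr rfl fun i _ => map_smul _ _ _
  have hint : ∀ i, Integrable (fun x => ℓ i (x - c) * fderiv ℝ W x (b i)) μ := fun i => by
    simpa only [map_smul, smul_eq_mul] using memLp_one_iff_integrable.1
      (memLp_fderiv_apply hW hcompact (h := fun x => ℓ i (x - c) • b i) (by fun_prop))
  simp only [hexpand, integral_finsetSum _ fun i _ => hint i, hcoord, Finset.sum_const,
    Finset.card_univ, Fintype.card_fin, smul_neg, nsmul_eq_mul]

end IntegrationByParts

section ConvexDistance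

open Filter Topology

variable {E : Type*} [NormedAddCommGroup E] [NormedSpace ℝ E] {C : Set E} {c x : E} {r : ℝ}

theorem infDist_add_smul_sub_le (hC : Convex ℝ C) (hball : closedBall c r ⊆ C) (hr : 0 ≤ r)
    (hx : 0 < infDist x C) {t : ℝ} (ht0 : 0 ≤ t) (ht1 : t < 1)
    (htr : t * r ≤ (1 - t) * infDist x C) :
    infDist (x + t • (c - x)) C ≤ (1 - t) * infDist x C - t * r := by
  have hcC : c ∈ C := hball (mem_closedBall_self hr)
  have hpoint : ∀ y ∈ C, infDist (x + t • (c - x)) C + t * r ≤ dist x y * (1 - t) := by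
    intro y hy
    have hd : infDist x C ≤ ‖x - y‖ := by
      simpa only [dist_eq_norm] using infDist_le_dist_of_mem (x := x) hy
    have hd0 : 0 < ‖x - y‖ := hx.trans_le hd
    have hw : c + (r / ‖x - y‖) • (x - y) ∈ C := hball <| by
      rw [mem_closedBall, dist_self_add_left, norm_smul, Real.norm_of_nonneg (by positivity),
        div_mul_cancel₀ _ hd0.ne']
    have hz : (1 - t) • y + t • (c + (r / ‖x - y‖) • (x - y)) ∈ C :=
      hC hy hw (by linarith) ht0 (by ring)
    have hdiff : x + t • (c - x) - ((1 - t) • y + t • (c + (r / ‖x - y‖) • (x - y))) =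
        (1 - t - t * (r / ‖x - y‖)) • (x - y) := by module
    have hdist : (1 - t - t * (r / ‖x - y‖)) * ‖x - y‖ = (1 - t) * ‖x - y‖ - t * r := by
      field_simp
    have hnonneg : t * r ≤ (1 - t) * ‖x - y‖ :=
      htr.trans (mul_le_mul_of_nonneg_left hd (by linarith))
    have hscale : 0 ≤ 1 - t - t * (r / ‖x - y‖) :=
      nonneg_of_mul_nonneg_left (by rw [hdist]; linarith) hd0
    have hle := infDist_le_dist_of_mem (x := x + t • (c - x)) hz
    rw [dist_eq_norm, hdiff, norm_smul_of_nonneg hscale, hdist] at hle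
    rw [dist_eq_norm]
    linarith
  have ht : 0 < 1 - t := by linarith
  have := (le_infDist ⟨c, hcC⟩).2 fun y hy => (div_le_iff₀ ht).2 (hpoint y hy)
  linarith [(div_le_iff₀ ht).1 this]

theorem infDist_add_le_fderiv_infDist (hC : Convex ℝ C) (hball : closedBall c r ⊆ C) (hr : 0 ≤ r)
    (hx : 0 < infDist x C) (hdiff : DifferentiableAt ℝ (infDist · C) x) :
    infDist x C + r ≤ fderiv ℝ (infDist · C) x (x - c) := by
  have hline : HasDerivAt (fun t : ℝ => infDist (x + t • (c - x)) C)
      (fderiv ℝ (infDist · C) x (c - x)) 0 := by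
    have := hdiff.hasFDerivAt.hasLineDerivAt (c - x)
    simpa only [HasLineDerivAt] using this
  have hsmall : ∀ᶠ t : ℝ in 𝓝[>] 0, t * r < (1 - t) * infDist x C := by
    refine nhdsWithin_le_nhds <| ContinuousAt.eventually_lt (by fun_prop) (by fun_prop) ?_
    simpa only [zero_mul, sub_zero, one_mul] using hx
  have hslope : ∀ᶠ t : ℝ in 𝓝[>] 0,
      t⁻¹ • (infDist (x + (0 + t) • (c - x)) C - infDist (x + (0 : ℝ) • (c - x)) C) ≤
        -(infDist x C + r) := by
    filter_upwards [hsmall, Ioo_mem_nhdsGT zero_lt_one] with t htr ⟨ht0, ht1⟩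
    rw [zero_add, zero_smul, add_zero, smul_eq_mul, inv_mul_le_iff₀ ht0]
    linarith [infDist_add_smul_sub_le hC hball hr hx ht0.le ht1 htr.le]
  have hle := le_of_tendsto hline.tendsto_slope_zero_right hslope
  rw [← neg_sub x c, map_neg] at hle
  linarith

/-- The weight `(1 + δ / r) ^ (m + 1) - 1` with `δ = infDist · C`: it is comparable to `δ` on
bounded sets, and around the centre of a ball of radius `r` in a convex `C` it grows radially at
rate `m · weight + 1`, which is what Hardy's inequality asks for when `m` is the dimension. -/
def growthWeight {X : Type*} [PseudoMetricSpace X] (C : Set X) (r : ℝ) (m : ℕ) (x : X) : ℝ :=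
  (1 + infDist x C / r) ^ (m + 1) - 1

theorem infDist_le_mul_growthWeight {X : Type*} [PseudoMetricSpace X] (C : Set X) {r : ℝ}
    (hr : 0 < r) (m : ℕ) (x : X) : infDist x C ≤ r * growthWeight C r m x := by
  have h : 1 ≤ 1 + infDist x C / r := le_add_of_nonneg_right (div_nonneg infDist_nonneg hr.le)
  rw [← div_le_iff₀' hr, growthWeight, le_sub_iff_add_le']
  exact le_self_pow₀ h m.succ_ne_zero

theorem growthWeight_le_mul_infDist {X : Type*} [PseudoMetricSpace X] {C : Set X} {r R : ℝ}
    (hr : 0 < r) (m : ℕ) {x : X} (hx : infDist x C ≤ R) :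
    growthWeight C r m x ≤ (∑ i ∈ Finset.range (m + 1), (1 + R / r) ^ i) / r * infDist x C := by
  have hnonneg : 0 ≤ infDist x C / r := div_nonneg infDist_nonneg hr.le
  calc growthWeight C r m x
      = infDist x C / r * ∑ i ∈ Finset.range (m + 1), (1 + infDist x C / r) ^ i := by
        rw [growthWeight, ← mul_geom_sum, add_sub_cancel_left]
    _ ≤ infDist x C / r * ∑ i ∈ Finset.range (m + 1), (1 + R / r) ^ i := by gcongr
    _ = _ := by ring

theorem locallyLipschitz_growthWeight {X : Type*} [PseudoMetricSpace X] (C : Set X) (r : ℝ)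
    (m : ℕ) : LocallyLipschitz (growthWeight C r m) :=
  (ContDiff.locallyLipschitz (by fun_prop : ContDiff ℝ 1 fun t => (1 + t / r) ^ (m + 1) - 1)).comp
    (lipschitz_infDist_pt C).locallyLipschitz

theorem hasFDerivAt_growthWeight (r : ℝ) (m : ℕ) (hdiff : DifferentiableAt ℝ (infDist · C) x) :
    HasFDerivAt (growthWeight C r m)
      (((m + 1) * (1 + infDist x C / r) ^ m / r) • fderiv ℝ (infDist · C) x) x := by
  have hderiv : HasDerivAt (fun t => (1 + t / r) ^ (m + 1) - 1)
      ((m + 1) * (1 + infDist x C / r) ^ m / r) (infDist x C) := by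
    simpa [mul_div_assoc, div_eq_mul_inv] using
      ((((hasDerivAt_id (infDist x C)).div_const r).const_add 1).pow (m + 1)).sub_const 1
  exact hderiv.comp_hasFDerivAt x hdiff.hasFDerivAt

theorem growthWeight_radial_growth (hC : Convex ℝ C) (hball : closedBall c r ⊆ C) (hr : 0 < r)
    (hx : 0 < infDist x C) (hdiff : DifferentiableAt ℝ (infDist · C) x) (m : ℕ) :
    m * growthWeight C r m x + 1 ≤ fderiv ℝ (growthWeight C r m) x (x - c) := by
  have hradial : 1 + infDist x C / r ≤ fderiv ℝ (infDist · C) x (x - c) / r := by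
    rw [le_div_iff₀ hr, add_mul, div_mul_cancel₀ _ hr.ne', one_mul, add_comm]
    exact infDist_add_le_fderiv_infDist hC hball hr.le hx hdiff
  have hone : 1 ≤ (1 + infDist x C / r) ^ (m + 1) :=
    one_le_pow₀ (le_add_of_nonneg_right (by positivity))
  calc m * growthWeight C r m x + 1
      ≤ (m + 1) * (1 + infDist x C / r) ^ (m + 1) := by
        rw [growthWeight]
        linarith [(Nat.cast_nonneg m : (0 : ℝ) ≤ m)]
    _ = (m + 1) * (1 + infDist x C / r) ^ m * (1 + infDist x C / r) := by ring
    _ ≤ (m + 1) * (1 + infDist x C / r) ^ m * (fderiv ℝ (infDist · C) x (x - c) / r) := by gcongr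
    _ = fderiv ℝ (growthWeight C r m) x (x - c) := by
        rw [(hasFDerivAt_growthWeight r m hdiff).fderiv, smul_apply, smul_eq_mul]
        ring

end ConvexDistance

section ExteriorCover

variable {E : Type*} [NormedAddCommGroup E] [NormedSpace ℝ E]

/-- `𝓒` is a finite family of fat convex sets outside `Ω` that together accumulate at every point of
`S`: a global form of an exterior cone condition at `S`. -/
structure ExteriorConvexCover (Ω S : Set E) (𝓒 : Set (Set E)) : Prop where
  finite : 𝓒.Finite
  convex : ∀ C ∈ 𝓒, Convex ℝ C
  interior_nonempty : ∀ C ∈ 𝓒, (interior C).Nonempty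
  disjoint : ∀ C ∈ 𝓒, Disjoint Ω C
  subset_closure : S ⊆ ⋃ C ∈ 𝓒, closure C

namespace ExteriorConvexCover

variable {Ω S : Set E} {𝓒 : Set (Set E)}

theorem mono (h : ExteriorConvexCover Ω S 𝓒) {T : Set E} (hT : T ⊆ S) :
    ExteriorConvexCover Ω T 𝓒 :=
  { h with subset_closure := hT.trans h.subset_closure }

theorem nonempty (h : ExteriorConvexCover Ω S 𝓒) (C : Set E) (hC : C ∈ 𝓒) : C.Nonempty :=
  (h.interior_nonempty C hC).mono interior_subset

theorem disjoint_set (h : ExteriorConvexCover Ω S 𝓒) (hΩ : IsOpen Ω) : Disjoint Ω S :=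
  (disjoint_iUnion₂_right.2 fun C hC => (h.disjoint C hC).closure_right hΩ).mono_right
    h.subset_closure

theorem exists_infDist_le (h : ExteriorConvexCover Ω S 𝓒) (hS : S.Nonempty) (x : E) :
    ∃ C ∈ 𝓒, infDist x C ≤ infDist x S := by
  have hcover : ∀ y ∈ S, ∃ C ∈ 𝓒, y ∈ closure C := fun y hy => by
    simpa only [mem_iUnion, exists_prop] using h.subset_closure hy
  obtain ⟨C, hC, hmin⟩ := exists_min_image 𝓒 (infDist x ·) h.finite
    (let ⟨y, hy⟩ := hS; let ⟨C, hC, _⟩ := hcover y hy; ⟨C, hC⟩)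
  refine ⟨C, hC, (le_infDist hS).2 fun y hy => ?_⟩
  obtain ⟨D, hD, hyD⟩ := hcover y hy
  calc infDist x C ≤ infDist x D := hmin D hD
    _ = infDist x (closure D) := infDist_closure.symm
    _ ≤ dist x y := infDist_le_dist_of_mem hyD

theorem sq_div_infDist_le (h : ExteriorConvexCover Ω S 𝓒) (hS : S.Nonempty) {v : E → ℝ}
    {L : NNReal} (hv : LipschitzWith L v) (hsupp : Function.support v ⊆ Ω) (x : E) :
    (v x / infDist x S) ^ 2 ≤ ∑ C ∈ h.finite.toFinset, (v x / infDist x C) ^ 2 := by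
  by_cases hx : v x = 0
  · simp [hx]
  obtain ⟨C, hC, hle⟩ := h.exists_infDist_le hS x
  have hpos : 0 < infDist x C := pos_of_abs_le_mul L.2 (abs_le_mul_infDist hv
    (h.nonempty C hC) ((h.disjoint C hC).mono_left hsupp) x) hx
  calc (v x / infDist x S) ^ 2 ≤ (v x / infDist x C) ^ 2 := by
        rw [div_pow, div_pow]
        gcongr
    _ ≤ _ := Finset.single_le_sum (f := fun C => (v x / infDist x C) ^ 2)
        (fun _ _ => sq_nonneg _) (h.finite.mem_toFinset.2 hC)

end ExteriorConvexCover

end ExteriorCover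

section Hardy

variable {E : Type*} [NormedAddCommGroup E] [NormedSpace ℝ E]

/-- Hardy's inequality on `Ω` for the weight `w` with constant `K`, tested on the Lipschitz
functions supported in `Ω`. -/
def HardyInequality [MeasurableSpace E] (μ : Measure E) (Ω : Set E) (w : E → ℝ) (K : ℝ) : Prop :=
  ∀ (v : E → ℝ) (L : NNReal), LipschitzWith L v → Function.support v ⊆ Ω →
    ∫ x, (v x / w x) ^ 2 ∂μ ≤ K * ∫ x, ‖fderiv ℝ v x‖ ^ 2 ∂μ

theorem hardy_pointwise {v ϱ : E → ℝ} {x w : E} {d : ℝ} (hv : DifferentiableAt ℝ v x)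
    (hϱ : DifferentiableAt ℝ ϱ x) (hx : ϱ x ≠ 0) (hgrowth : d * ϱ x + 1 ≤ fderiv ℝ ϱ x w) :
    1 / 2 * (v x / ϱ x) ^ 2 + (d * (v x ^ 2 / ϱ x) + fderiv ℝ (fun y => v y ^ 2 / ϱ y) x w) ≤
      2 * fderiv ℝ v x w ^ 2 := by
  have hderiv : fderiv ℝ (fun y => v y ^ 2 / ϱ y) x w =
      2 * (v x / ϱ x) * fderiv ℝ v x w - (v x / ϱ x) ^ 2 * fderiv ℝ ϱ x w := by
    have := ((hv.hasFDerivAt.pow 2).mul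
      ((hasDerivAt_inv hx).comp_hasFDerivAt x hϱ.hasFDerivAt)).fderiv
    rw [show (fun y => v y ^ 2 / ϱ y) = (fun y => v y ^ 2) * (Inv.inv ∘ ϱ) from rfl, this]
    simp only [neg_smul, smul_neg, Function.comp_apply, Nat.add_one_sub_one, pow_one, nsmul_eq_mul,
      Nat.cast_ofNat, add_apply, neg_apply, smul_apply, smul_eq_mul]
    field_simp
    ring
  have hmul : v x ^ 2 / ϱ x = (v x / ϱ x) ^ 2 * ϱ x := by field_simp
  rw [hderiv, hmul]
  nlinarith [mul_le_mul_of_nonneg_left hgrowth (sq_nonneg (v x / ϱ x)),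
    sq_nonneg (v x / ϱ x - 2 * fderiv ℝ v x w)]

theorem sq_div_le_mul_sq_div {a d e q : ℝ} (hd : 0 < d) (he : 0 < e) (hle : e ≤ q * d) :
    (a / d) ^ 2 ≤ q ^ 2 * (a / e) ^ 2 := by
  rw [div_pow, div_pow, ← mul_div_assoc, div_le_div_iff₀ (by positivity) (by positivity),
    mul_comm (q ^ 2), mul_assoc, ← mul_pow q]
  gcongr

theorem sq_fderiv_apply_sub_le {v : E → ℝ} {c : E} {R : ℝ}
    (hsupp : tsupport v ⊆ closedBall c R) (x : E) :
    fderiv ℝ v x (x - c) ^ 2 ≤ R ^ 2 * ‖fderiv ℝ v x‖ ^ 2 := by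
  by_cases hx : x ∈ tsupport v
  · rw [← mul_pow, ← sq_abs, mul_comm R]
    gcongr
    exact (fderiv ℝ v x).le_opNorm_of_le (mem_closedBall_iff_norm.1 (hsupp hx))
  · simp [fderiv_of_notMem_tsupport ℝ hx]

variable [FiniteDimensional ℝ E] [MeasurableSpace E] [BorelSpace E] {μ : Measure E}
  [μ.IsAddHaarMeasure]

theorem integral_sq_div_le_of_growth {v ϱ : E → ℝ} {Kv Kϱ M : NNReal} {c : E}
    (hv : LipschitzWith Kv v) (hcompact : HasCompactSupport v) (hmeas : Measurable ϱ)
    (hϱ : LipschitzOnWith Kϱ ϱ (Function.support v)) (hle : ∀ x, |v x| ≤ M * ϱ x)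
    (hgrowth : ∀ᵐ x ∂μ, x ∈ Function.support v → DifferentiableAt ℝ ϱ x ∧
      Module.finrank ℝ E * ϱ x + 1 ≤ fderiv ℝ ϱ x (x - c)) :
    ∫ x, (v x / ϱ x) ^ 2 ∂μ ≤ 4 * ∫ x, fderiv ℝ v x (x - c) ^ 2 ∂μ := by
  let W : E → ℝ := fun x => v x ^ 2 / ϱ x
  have hW : LipschitzWith _ W := lipschitzWith_sq_div hv hϱ hle
  have hWcompact : HasCompactSupport W := hcompact.mono fun x hx h => hx (by simp [W, h])
  have hpos : ∀ x, v x ≠ 0 → 0 < ϱ x := fun x hx =>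
    pos_of_abs_le_mul M.2 (hle x) hx
  have hnonneg : ∀ x, 0 ≤ W x := fun x => by
    by_cases hx : v x = 0
    · simp only [W, hx, zero_pow two_ne_zero, zero_div, le_refl]
    · exact div_nonneg (sq_nonneg _) (hpos x hx).le
  have hpointwise : ∀ᵐ x ∂μ, 1 / 2 * (v x / ϱ x) ^ 2 +
      (Module.finrank ℝ E * W x + fderiv ℝ W x (x - c)) ≤ 2 * fderiv ℝ v x (x - c) ^ 2 := by
    filter_upwards [hgrowth, hv.ae_differentiableAt] with x hgx hvx
    by_cases hx : v x = 0
    · have hWx : W x = 0 := by simp only [W, hx, zero_pow two_ne_zero, zero_div]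
      have hmin : IsLocalMin W x := .of_forall fun y => hWx.trans_le (hnonneg y)
      rw [hmin.fderiv_eq_zero, hWx, hx]
      simp only [zero_div, zero_apply, mul_zero, add_zero, zero_pow two_ne_zero]
      positivity
    · exact hardy_pointwise hvx (hgx hx).1 (hpos x hx).ne' (hgx hx).2
  have hquot := (memLp_div (μ := μ) hv.continuous hcompact hmeas hle).integrable_sq
  have hWint : Integrable W μ := hW.continuous.integrable_of_hasCompactSupport hWcompact
  have hradial : Continuous fun x : E => x - c := by fun_prop
  have hWderiv : Integrable (fun x => fderiv ℝ W x (x - c)) μ :=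
    memLp_one_iff_integrable.1 (memLp_fderiv_apply hW hWcompact hradial)
  have hvderiv := (memLp_fderiv_apply (μ := μ) hv hcompact hradial).integrable_sq
  have hmono : ∫ x, 1 / 2 * (v x / ϱ x) ^ 2 + (Module.finrank ℝ E * W x + fderiv ℝ W x (x - c)) ∂μ ≤
      ∫ x, 2 * fderiv ℝ v x (x - c) ^ 2 ∂μ :=
    integral_mono_ae ((hquot.const_mul _).add ((hWint.const_mul _).add hWderiv))
      (hvderiv.const_mul 2) hpointwise
  rw [integral_add (hquot.const_mul _) ?_, integral_add (hWint.const_mul _) hWderiv,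
    integral_fderiv_apply_sub hW hWcompact] at hmono
  · simp only [integral_const_mul, add_neg_cancel, add_zero] at hmono
    linarith
  · exact (hWint.const_mul _).add hWderiv


theorem integral_sq_div_growthWeight_le {C : Set E} {c : E} {r : ℝ} {v : E → ℝ} {L M : NNReal}
    (hC : Convex ℝ C) (hr : 0 < r) (hball : closedBall c r ⊆ C) (hv : LipschitzWith L v)
    (hcompact : HasCompactSupport v)
    (hle : ∀ x, |v x| ≤ M * growthWeight C r (Module.finrank ℝ E) x) :
    ∫ x, (v x / growthWeight C r (Module.finrank ℝ E) x) ^ 2 ∂μ ≤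
      4 * ∫ x, fderiv ℝ v x (x - c) ^ 2 ∂μ := by
  have hweight := locallyLipschitz_growthWeight C r (Module.finrank ℝ E)
  obtain ⟨Kϱ, hKϱ⟩ :=
    (hweight.locallyLipschitzOn (s := tsupport v)).exists_lipschitzOnWith_of_compact hcompact
  refine integral_sq_div_le_of_growth hv hcompact hweight.continuous.measurable
    (hKϱ.mono (subset_tsupport v)) hle ?_
  filter_upwards [(lipschitz_infDist_pt C).ae_differentiableAt] with x hx hvx
  have hpos : 0 < infDist x C := by
    refine infDist_nonneg.lt_of_ne' fun h => hvx (abs_nonpos_iff.1 ((hle x).trans_eq ?_))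
    rw [growthWeight, h, zero_div, add_zero, one_pow, sub_self, mul_zero]
  exact ⟨(hasFDerivAt_growthWeight r _ hx).differentiableAt,
    growthWeight_radial_growth hC hball hr hpos hx _⟩

theorem integral_sq_div_infDist_convex_le {Ω C : Set E} {c : E} {r R : ℝ} {v : E → ℝ} {L : NNReal}
    (hC : Convex ℝ C) (hr : 0 < r) (hball : closedBall c r ⊆ C) (hΩ : Ω ⊆ closedBall c R)
    (hdisj : Disjoint Ω C) (hv : LipschitzWith L v) (hsupp : Function.support v ⊆ Ω) :
    ∫ x, (v x / infDist x C) ^ 2 ∂μ ≤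
      ((∑ i ∈ Finset.range (Module.finrank ℝ E + 1), (1 + R / r) ^ i) / r) ^ 2 * (4 * R ^ 2) *
        ∫ x, ‖fderiv ℝ v x‖ ^ 2 ∂μ := by
  let m := Module.finrank ℝ E
  let Q : ℝ := (∑ i ∈ Finset.range (m + 1), (1 + R / r) ^ i) / r
  have hcC : c ∈ C := hball (mem_closedBall_self hr.le)
  have htsupp : tsupport v ⊆ closedBall c R :=
    closure_minimal (hsupp.trans hΩ) isClosed_closedBall
  have hcompact : HasCompactSupport v := (isCompact_closedBall c R).of_isClosed_subset
    (isClosed_tsupport v) htsupp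
  have hvC : Disjoint (Function.support v) C := hdisj.mono_left hsupp
  have hle : ∀ x, |v x| ≤ L * infDist x C := abs_le_mul_infDist hv ⟨c, hcC⟩ hvC
  have hle' : ∀ x, |v x| ≤ (L * r.toNNReal : NNReal) * growthWeight C r m x := fun x => by
    rw [NNReal.coe_mul, Real.coe_toNNReal r hr.le, mul_assoc]
    exact (hle x).trans (mul_le_mul_of_nonneg_left (infDist_le_mul_growthWeight C hr m x) L.2)
  have hweight := (locallyLipschitz_growthWeight C r m).continuous.measurable
  have hcompare : ∀ x, (v x / infDist x C) ^ 2 ≤ Q ^ 2 * (v x / growthWeight C r m x) ^ 2 := by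
    intro x
    by_cases hx : v x = 0
    · simp [hx]
    · exact sq_div_le_mul_sq_div (pos_of_abs_le_mul L.2 (hle x) hx)
        (pos_of_abs_le_mul NNReal.zero_le_coe (hle' x) hx)
        (growthWeight_le_mul_infDist hr m ((infDist_le_dist_of_mem hcC).trans (hΩ (hsupp hx))))
  have hquot := (memLp_div_infDist (μ := μ) hv hcompact ⟨c, hcC⟩ hvC).integrable_sq
  have hquot' := (memLp_div (μ := μ) hv.continuous hcompact hweight hle').integrable_sq
  calc ∫ x, (v x / infDist x C) ^ 2 ∂μ
      ≤ Q ^ 2 * ∫ x, (v x / growthWeight C r m x) ^ 2 ∂μ :=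
        (integral_mono hquot (hquot'.const_mul _) hcompare).trans_eq (integral_const_mul _ _)
    _ ≤ Q ^ 2 * (4 * ∫ x, fderiv ℝ v x (x - c) ^ 2 ∂μ) := by
        gcongr
        exact integral_sq_div_growthWeight_le hC hr hball hv hcompact hle'
    _ ≤ Q ^ 2 * (4 * (R ^ 2 * ∫ x, ‖fderiv ℝ v x‖ ^ 2 ∂μ)) := by
        gcongr _ * (4 * ?_)
        rw [← integral_const_mul]
        exact integral_mono (memLp_fderiv_apply hv hcompact (by fun_prop)).integrable_sq
          ((memLp_fderiv hv hcompact).norm.integrable_sq.const_mul _)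
          (sq_fderiv_apply_sub_le htsupp)
    _ = Q ^ 2 * (4 * R ^ 2) * ∫ x, ‖fderiv ℝ v x‖ ^ 2 ∂μ := by ring

theorem exists_hardyInequality_infDist_convex (μ : Measure E) [μ.IsAddHaarMeasure] {Ω C : Set E}
    (hΩ : Bornology.IsBounded Ω) (hC : Convex ℝ C) (hint : (interior C).Nonempty)
    (hdisj : Disjoint Ω C) :
    ∃ K : ℝ, 0 ≤ K ∧ HardyInequality μ Ω (infDist · C) K := by
  obtain ⟨c, hc⟩ := hint
  obtain ⟨r, hr, hball⟩ := nhds_basis_closedBall.mem_iff.1 (mem_interior_iff_mem_nhds.1 hc)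
  obtain ⟨R, hR⟩ := hΩ.subset_closedBall c
  exact ⟨_, by positivity, fun _ _ => integral_sq_div_infDist_convex_le hC hr hball hR hdisj⟩

theorem exists_hardyInequality_infDist (μ : Measure E) [μ.IsAddHaarMeasure] {Ω S : Set E}
    {𝓒 : Set (Set E)} (hΩ : Bornology.IsBounded Ω) (hS : S.Nonempty)
    (hcover : ExteriorConvexCover Ω S 𝓒) :
    ∃ K : ℝ, 0 ≤ K ∧ HardyInequality μ Ω (infDist · S) K := by
  choose! K hK hardy using fun C hC =>
    exists_hardyInequality_infDist_convex μ hΩ (hcover.convex C hC) (hcover.interior_nonempty C hC)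
      (hcover.disjoint C hC)
  refine ⟨∑ C ∈ hcover.finite.toFinset, K C,
    Finset.sum_nonneg fun C hC => hK C (hcover.finite.mem_toFinset.1 hC),
    fun v L hv hsupp => ?_⟩
  have hint : ∀ C ∈ hcover.finite.toFinset, Integrable (fun x => (v x / infDist x C) ^ 2) μ := by
    intro C hC
    rw [Finite.mem_toFinset] at hC
    exact (memLp_div_infDist hv (hΩ.subset hsupp).isCompact_closure (hcover.nonempty C hC)
      ((hcover.disjoint C hC).mono_left hsupp)).integrable_sq
  calc ∫ x, (v x / infDist x S) ^ 2 ∂μ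
      ≤ ∫ x, ∑ C ∈ hcover.finite.toFinset, (v x / infDist x C) ^ 2 ∂μ :=
        integral_mono_of_nonneg (.of_forall fun _ => sq_nonneg _)
          (integrable_finsetSum _ hint) (.of_forall (hcover.sq_div_infDist_le hS hv hsupp))
    _ = ∑ C ∈ hcover.finite.toFinset, ∫ x, (v x / infDist x C) ^ 2 ∂μ := integral_finsetSum _ hint
    _ ≤ ∑ C ∈ hcover.finite.toFinset, K C * ∫ x, ‖fderiv ℝ v x‖ ^ 2 ∂μ :=
        Finset.sum_le_sum fun C hC => hardy C (hcover.finite.mem_toFinset.1 hC) v L hv hsupp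
    _ = _ := (Finset.sum_mul _ _ _).symm

end Hardy

section Green

variable {n : ℕ}

theorem norm_gradient {F : Type*} [NormedAddCommGroup F] [InnerProductSpace ℝ F] [CompleteSpace F]
    (u : F → ℝ) (x : F) : ‖gradient u x‖ = ‖fderiv ℝ u x‖ := by
  rw [gradient, LinearIsometryEquiv.norm_map]

theorem gradient_apply (u : EuclideanSpace ℝ (Fin n) → ℝ) (x : EuclideanSpace ℝ (Fin n))
    (j : Fin n) : gradient u x j = fderiv ℝ u x (EuclideanSpace.single j 1) := by
  rw [← InnerProductSpace.toDual_symm_apply (𝕜 := ℝ), EuclideanSpace.inner_single_right, one_mul]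
  rfl

theorem continuous_laplaceOp {u : EuclideanSpace ℝ (Fin n) → ℝ} (hu : ContDiff ℝ 2 u) :
    Continuous (laplaceOp u) := by
  have hu' : ContDiff ℝ 1 (fderiv ℝ u) := hu.fderiv_right (by norm_num)
  exact continuous_finsetSum _ fun j _ =>
    ((hu'.clm_apply contDiff_const).continuous_fderiv one_ne_zero).clm_apply continuous_const

theorem integral_mul_laplaceOp {u v : EuclideanSpace ℝ (Fin n) → ℝ} {L : NNReal}
    (hu : ContDiff ℝ 2 u) (hcompact : HasCompactSupport u) (hv : LipschitzWith L v) :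
    ∫ x, v x * laplaceOp u x = -∫ x, ⟪gradient v x, gradient u x⟫ := by
  let e : Fin n → EuclideanSpace ℝ (Fin n) := fun j => EuclideanSpace.single j 1
  have hpartial : ∀ j, ContDiff ℝ 1 fun x => fderiv ℝ u x (e j) := fun j =>
    (hu.fderiv_right (by norm_num)).clm_apply contDiff_const
  have hsupp : ∀ j, HasCompactSupport fun x => fderiv ℝ u x (e j) := fun j =>
    hcompact.fderiv_apply ℝ (e j)
  have hint : ∀ j, Integrable fun x => fderiv ℝ u x (e j) * fderiv ℝ v x (e j) := fun j =>
    ((hpartial j).continuous.integrable_of_hasCompactSupport (hsupp j)).mul_bdd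
      (measurable_fderiv_apply_const ℝ v (e j)).aestronglyMeasurable
      (.of_forall fun x => (fderiv ℝ v x).le_of_opNorm_le (norm_fderiv_le_of_lipschitz ℝ hv) (e j))
  have hint' : ∀ j, Integrable fun x => v x * fderiv ℝ (fun y => fderiv ℝ u y (e j)) x (e j) :=
    fun j => (hv.continuous.mul (((hpartial j).continuous_fderiv one_ne_zero).clm_apply
      continuous_const)).integrable_of_hasCompactSupport ((hsupp j).fderiv_apply ℝ (e j)).mul_left
  simp only [PiLp.inner_apply, gradient_apply, RCLike.inner_apply, conj_trivial, laplaceOp,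
    Finset.mul_sum]
  rw [integral_finsetSum _ fun j _ => hint' j, integral_finsetSum _ fun j _ => hint j,
    ← Finset.sum_neg_distrib]
  refine Finset.sum_congr rfl fun j _ => ?_
  obtain ⟨K, hK⟩ := (hpartial j).lipschitzWith_of_hasCompactSupport (hsupp j) one_ne_zero
  rw [integral_mul_fderiv_apply hv hK (hsupp j)]
  simp only [mul_comm, e]

theorem integral_norm_gradient_sq {Ω : Set (EuclideanSpace ℝ (Fin n))}
    {u : EuclideanSpace ℝ (Fin n) → ℝ} (hΩ : IsOpen Ω) (hnull : volume (frontier Ω) = 0)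
    (hu : ContDiff ℝ 2 u) (hcompact : HasCompactSupport u) (hzero : ∀ x ∈ frontier Ω, u x = 0) :
    ∫ x in Ω, ‖gradient u x‖ ^ 2 = -∫ x in Ω, u x * laplaceOp u x := by
  obtain ⟨L, hL⟩ := hu.lipschitzWith_of_hasCompactSupport hcompact two_ne_zero
  have hgreen := integral_mul_laplaceOp hu hcompact (lipschitzWith_indicator hL hzero)
  have hgrad : ∀ᵐ x, ⟪gradient (Ω.indicator u) x, gradient u x⟫ =
      Ω.indicator (fun x => ‖gradient u x‖ ^ 2) x := by
    filter_upwards [measure_eq_zero_iff_ae_notMem.1 hnull] with x hx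
    rw [gradient, fderiv_indicator_of_notMem_frontier u hx]
    by_cases hxΩ : x ∈ Ω
    · rw [indicator_of_mem hxΩ, indicator_of_mem hxΩ, ← real_inner_self_eq_norm_sq, gradient]
    · rw [indicator_of_notMem hxΩ, indicator_of_notMem hxΩ, map_zero, inner_zero_left]
  rw [integral_congr_ae hgrad, integral_indicator hΩ.measurableSet] at hgreen
  simp only [← indicator_mul_left] at hgreen
  rw [integral_indicator hΩ.measurableSet] at hgreen
  rw [hgreen, neg_neg]

end Green

section Stability

theorem sq_indicator_div {X : Type*} (s : Set X) (f g : X → ℝ) :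
    (fun x => (s.indicator f x / g x) ^ 2) = s.indicator fun x => (f x / g x) ^ 2 := by
  ext x
  by_cases hx : x ∈ s <;> simp [hx]

theorem integral_norm_fderiv_indicator_sq {E : Type*} [NormedAddCommGroup E] [NormedSpace ℝ E]
    [MeasurableSpace E] {μ : Measure E} {Ω : Set E} (hΩ : MeasurableSet Ω)
    (hnull : μ (frontier Ω) = 0) (u : E → ℝ) :
    ∫ x, ‖fderiv ℝ (Ω.indicator u) x‖ ^ 2 ∂μ = ∫ x in Ω, ‖fderiv ℝ u x‖ ^ 2 ∂μ := by
  rw [← integral_indicator hΩ]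
  refine integral_congr_ae ?_
  filter_upwards [measure_eq_zero_iff_ae_notMem.1 hnull] with x hx
  rw [fderiv_indicator_of_notMem_frontier u hx]
  by_cases hxΩ : x ∈ Ω <;> simp [hxΩ]

theorem neg_mul_le_sq_div_add_mul_sq {a b d P : ℝ} (hP : 0 < P) (hd : a ≠ 0 → d ≠ 0) :
    -(a * b) ≤ 1 / (2 * P) * (a / d) ^ 2 + P / 2 * (d ^ 2 * b ^ 2) := by
  have hcancel : a / d * d = a := div_mul_cancel_of_imp fun h => by_contra fun ha => hd ha h
  have hsq : 0 ≤ (a / d + P * (d * b)) ^ 2 / (2 * P) := by positivity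
  have hexpand : (a / d + P * (d * b)) ^ 2 / (2 * P) =
      1 / (2 * P) * (a / d) ^ 2 + a / d * d * b + P / 2 * (d ^ 2 * b ^ 2) := by
    field_simp
    ring
  rw [hexpand, hcancel] at hsq
  linarith

theorem add_le_of_le_mul_of_le_add {A B G P : ℝ} (hP : 0 < P) (hAB : A ≤ P * B)
    (hB : B ≤ 1 / (2 * P) * A + P / 2 * G) : A + B ≤ (P ^ 2 + P) * G := by
  have hA : 1 / (2 * P) * A ≤ B / 2 := by
    rw [one_div_mul_eq_div, div_le_iff₀ (by positivity)]
    linarith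
  nlinarith [mul_le_mul_of_nonneg_left (show B ≤ P * G by linarith) hP.le]

theorem integrableOn_of_continuous_of_isBounded {X : Type*} [MetricSpace X] [ProperSpace X]
    [MeasurableSpace X] [OpensMeasurableSpace X] {μ : Measure X} [IsFiniteMeasureOnCompacts μ]
    {f : X → ℝ} {s : Set X} (hf : Continuous f) (hs : Bornology.IsBounded s) :
    IntegrableOn f s μ :=
  (hf.continuousOn.integrableOn_compact hs.isCompact_closure).mono_set subset_closure

theorem integrableOn_sq_div_infDist {X : Type*} [PseudoMetricSpace X]
    [MeasurableSpace X] [OpensMeasurableSpace X] {μ : Measure X} [IsFiniteMeasureOnCompacts μ]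
    {f : X → ℝ} {K : NNReal} {s t : Set X} (hs : MeasurableSet s)
    (hf : LipschitzWith K (s.indicator f)) (hcompact : HasCompactSupport f) (ht : t.Nonempty)
    (hdisj : Disjoint s t) : IntegrableOn (fun x => (f x / infDist x t) ^ 2) s μ := by
  rw [← integrable_indicator_iff hs, ← sq_indicator_div]
  exact (memLp_div_infDist hf (hcompact.mono (support_indicator.trans_subset inter_subset_right)) ht
    (hdisj.mono_left support_indicator_subset)).integrable_sq

variable {n : ℕ} {Ω S : Set (EuclideanSpace ℝ (Fin n))} {u : EuclideanSpace ℝ (Fin n) → ℝ}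

theorem integral_norm_gradient_sq_le {P : ℝ} {L : NNReal} (hP : 0 < P) (hΩ : IsOpen Ω)
    (hb : Bornology.IsBounded Ω) (hnull : volume (frontier Ω) = 0) (hS : S.Nonempty)
    (hdisj : Disjoint Ω S) (hu : ContDiff ℝ 2 u) (hcompact : HasCompactSupport u)
    (hzero : ∀ x ∈ frontier Ω, u x = 0) (hlip : LipschitzWith L (Ω.indicator u)) :
    ∫ x in Ω, ‖gradient u x‖ ^ 2 ≤ 1 / (2 * P) * (∫ x in Ω, (u x / infDist x S) ^ 2) +
      P / 2 * ∫ x in Ω, infDist x S ^ 2 * laplaceOp u x ^ 2 := by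
  have hlap := continuous_laplaceOp hu
  have hquot : IntegrableOn (fun x => (u x / infDist x S) ^ 2) Ω :=
    integrableOn_sq_div_infDist hΩ.measurableSet hlip hcompact hS hdisj
  have hright : IntegrableOn (fun x => infDist x S ^ 2 * laplaceOp u x ^ 2) Ω :=
    integrableOn_of_continuous_of_isBounded
      (((continuous_infDist_pt S).pow 2).mul (hlap.pow 2)) hb
  have hpos : ∀ x ∈ Ω, u x ≠ 0 → infDist x S ≠ 0 := fun x hx hux =>
    (pos_of_abs_le_mul L.2 (abs_le_mul_infDist hlip hS
      (hdisj.mono_left support_indicator_subset) x) (by rwa [indicator_of_mem hx])).ne'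
  rw [integral_norm_gradient_sq hΩ hnull hu hcompact hzero, ← integral_neg, ← integral_const_mul,
    ← integral_const_mul, ← integral_add (hquot.const_mul _) (hright.const_mul _)]
  exact setIntegral_mono_on
    (integrableOn_of_continuous_of_isBounded (hu.continuous.mul hlap) hb).neg
    ((hquot.const_mul _).add (hright.const_mul _)) hΩ.measurableSet
    fun x hx => neg_mul_le_sq_div_add_mul_sq hP (hpos x hx)

theorem integral_sq_div_infDist_le {K : ℝ} {L : NNReal} (hΩ : IsOpen Ω)
    (hnull : volume (frontier Ω) = 0) (hlip : LipschitzWith L (Ω.indicator u))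
    (hardy : HardyInequality volume Ω (infDist · S) K) :
    ∫ x in Ω, (u x / infDist x S) ^ 2 ≤ K * ∫ x in Ω, ‖gradient u x‖ ^ 2 := by
  simpa only [sq_indicator_div, integral_indicator hΩ.measurableSet, norm_gradient,
    integral_norm_fderiv_indicator_sq hΩ.measurableSet hnull] using
    hardy _ L hlip support_indicator_subset

theorem dirichlet_stability_of_hardy {P : ℝ} (hP : 0 < P) (hΩ : IsOpen Ω)
    (hb : Bornology.IsBounded Ω) (hnull : volume (frontier Ω) = 0) (hS : S.Nonempty)
    (hdisj : Disjoint Ω S)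
    (hardy : HardyInequality volume Ω (infDist · S) P)
    (hu : ContDiff ℝ 2 u) (hcompact : HasCompactSupport u) (hzero : ∀ x ∈ frontier Ω, u x = 0) :
    (∫⁻ x in Ω, ENNReal.ofReal (u x ^ 2 / infDist x S ^ 2)) +
        (∫⁻ x in Ω, ENNReal.ofReal (‖gradient u x‖ ^ 2)) ≤
      ENNReal.ofReal (P ^ 2 + P) *
        ∫⁻ x in Ω, ENNReal.ofReal (infDist x S ^ 2 * laplaceOp u x ^ 2) := by
  obtain ⟨L, hL⟩ := hu.lipschitzWith_of_hasCompactSupport hcompact two_ne_zero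
  have hlip := lipschitzWith_indicator hL hzero
  have hquot : IntegrableOn (fun x => (u x / infDist x S) ^ 2) Ω :=
    integrableOn_sq_div_infDist hΩ.measurableSet hlip hcompact hS hdisj
  have hgrad : IntegrableOn (fun x => ‖gradient u x‖ ^ 2) Ω := by
    simp only [norm_gradient]
    exact integrableOn_of_continuous_of_isBounded ((hu.continuous_fderiv two_ne_zero).norm.pow 2) hb
  have hright : IntegrableOn (fun x => infDist x S ^ 2 * laplaceOp u x ^ 2) Ω :=
    integrableOn_of_continuous_of_isBounded
      (((continuous_infDist_pt S).pow 2).mul ((continuous_laplaceOp hu).pow 2)) hb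
  simp only [← div_pow]
  rw [← ofReal_integral_eq_lintegral_ofReal hquot (.of_forall fun x => by positivity),
    ← ofReal_integral_eq_lintegral_ofReal hgrad (.of_forall fun x => by positivity),
    ← ofReal_integral_eq_lintegral_ofReal hright (.of_forall fun x => by positivity),
    ← ENNReal.ofReal_add (integral_nonneg fun x => by positivity)
      (integral_nonneg fun x => by positivity), ← ENNReal.ofReal_mul (by positivity)]
  exact ENNReal.ofReal_le_ofReal <| add_le_of_le_mul_of_le_add hP
    (integral_sq_div_infDist_le hΩ hnull hlip hardy)
    (integral_norm_gradient_sq_le hP hΩ hb hnull hS hdisj hu hcompact hzero hlip)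

theorem eqOn_gradient {F : Type*} [NormedAddCommGroup F] [InnerProductSpace ℝ F] [CompleteSpace F]
    {s : Set F} {f g : F → ℝ} (hs : IsOpen s) (h : EqOn f g s) :
    EqOn (gradient f) (gradient g) s := fun x hx => by
  rw [gradient, gradient, (h.eventuallyEq_of_mem (hs.mem_nhds hx)).fderiv_eq]

theorem eqOn_laplaceOp {w : EuclideanSpace ℝ (Fin n) → ℝ} (hΩ : IsOpen Ω) (h : EqOn u w Ω) :
    EqOn (laplaceOp u) (laplaceOp w) Ω := fun x hx =>
  Finset.sum_congr rfl fun j _ => by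
    have hpartial : (fun y => fderiv ℝ u y (EuclideanSpace.single j 1)) =ᶠ[nhds x]
        fun y => fderiv ℝ w y (EuclideanSpace.single j 1) :=
      ((h.eventuallyEq_of_mem (hΩ.mem_nhds hx)).fderiv (𝕜 := ℝ)).mono fun y hy => by
        simp only [hy]
    rw [hpartial.fderiv_eq]

theorem dirichlet_stability_polyhedral_general {𝓒 : Set (Set (EuclideanSpace ℝ (Fin n)))}
    (hΩ : IsOpen Ω) (hb : Bornology.IsBounded Ω) (hnull : volume (frontier Ω) = 0)
    (hS : S.Nonempty) (hcover : ExteriorConvexCover Ω S 𝓒) :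
    ∃ κ : ℝ, 0 < κ ∧ ∀ u : EuclideanSpace ℝ (Fin n) → ℝ,
      (∃ U : Set (EuclideanSpace ℝ (Fin n)), IsOpen U ∧ closure Ω ⊆ U ∧ ContDiffOn ℝ 2 u U) →
      (∀ x ∈ frontier Ω, u x = 0) →
      (∫⁻ x in Ω, ENNReal.ofReal (u x ^ 2 / infDist x S ^ 2)) +
          (∫⁻ x in Ω, ENNReal.ofReal (‖gradient u x‖ ^ 2)) ≤
        ENNReal.ofReal κ * ∫⁻ x in Ω, ENNReal.ofReal (infDist x S ^ 2 * laplaceOp u x ^ 2) := by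
  obtain ⟨K, hK, hardy⟩ := exists_hardyInequality_infDist volume hb hS hcover
  refine ⟨(K + 1) ^ 2 + (K + 1), by positivity, fun u ⟨U, hU, hΩU, hu⟩ hzero => ?_⟩
  obtain ⟨w, hw, hcompact, hwu⟩ :=
    exists_contDiff_hasCompactSupport_eqOn (k := 2) hb.isCompact_closure hU hΩU hu
  have huw : EqOn u w Ω := hwu.symm.mono subset_closure
  have hstable := dirichlet_stability_of_hardy (P := K + 1) (by positivity) hΩ hb hnull hS
    (hcover.disjoint_set hΩ) (fun v L hv hsupp => (hardy v L hv hsupp).trans (by gcongr; linarith))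
    hw hcompact fun x hx => (hwu (frontier_subset_closure hx)).trans (hzero x hx)
  have hleft : ∫⁻ x in Ω, ENNReal.ofReal (u x ^ 2 / infDist x S ^ 2) =
      ∫⁻ x in Ω, ENNReal.ofReal (w x ^ 2 / infDist x S ^ 2) :=
    setLIntegral_congr_fun hΩ.measurableSet fun x hx => by simp only [huw hx]
  have hgrad : ∫⁻ x in Ω, ENNReal.ofReal (‖gradient u x‖ ^ 2) =
      ∫⁻ x in Ω, ENNReal.ofReal (‖gradient w x‖ ^ 2) :=
    setLIntegral_congr_fun hΩ.measurableSet fun x hx => by simp only [eqOn_gradient hΩ huw hx]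
  have hright : ∫⁻ x in Ω, ENNReal.ofReal (infDist x S ^ 2 * laplaceOp u x ^ 2) =
      ∫⁻ x in Ω, ENNReal.ofReal (infDist x S ^ 2 * laplaceOp w x ^ 2) :=
    setLIntegral_congr_fun hΩ.measurableSet fun x hx => by simp only [eqOn_laplaceOp hΩ huw hx]
  rwa [hleft, hgrad, hright]

end Stability

section SignCell

variable {ι E : Type*} [NormedAddCommGroup E] [NormedSpace ℝ E]

/-- The cell cut out by the zero sets of the affine functions `ℓ i` on which they have signs `σ i`;
the cells with all signs nonzero are the chambers of the arrangement. -/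
def signCell (ℓ : ι → E →ᵃ[ℝ] ℝ) (σ : ι → SignType) : Set E :=
  {x | ∀ i, SignType.sign (ℓ i x) = σ i}

theorem convex_signCell (ℓ : ι → E →ᵃ[ℝ] ℝ) (σ : ι → SignType) : Convex ℝ (signCell ℓ σ) := by
  have hcell : signCell ℓ σ = ⋂ i, ℓ i ⁻¹' (SignType.sign ⁻¹' {σ i}) := by
    ext x
    simp [signCell]
  rw [hcell]
  exact convex_iInter fun i =>
    (ordConnected_singleton.preimage_mono SignType.sign.monotone).convex.affine_preimage (ℓ i)

variable [FiniteDimensional ℝ E]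

theorem isOpen_signCell [Finite ι] (ℓ : ι → E →ᵃ[ℝ] ℝ) {σ : ι → SignType} (hσ : ∀ i, σ i ≠ 0) :
    IsOpen (signCell ℓ σ) := by
  simp only [signCell, ofPred_forall]
  refine isOpen_iInter_of_finite fun i => ?_
  have hcont : Continuous (ℓ i) := (ℓ i).continuous_of_finiteDimensional
  rcases hsign : σ i with _ | _ | _
  · exact absurd hsign (hσ i)
  · simpa only [SignType.neg_eq_neg_one, sign_eq_neg_one_iff] using isOpen_lt hcont continuous_const
  · simpa only [SignType.pos_eq_one, sign_eq_one_iff] using isOpen_lt continuous_const hcont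

variable [MeasurableSpace E] [BorelSpace E]

theorem addHaar_affineMap_zeros (μ : Measure E) [μ.IsAddHaarMeasure] {ℓ : E →ᵃ[ℝ] ℝ} (hℓ : ℓ ≠ 0) :
    μ {x | ℓ x = 0} = 0 := by
  have hzeros : {x | ℓ x = 0} = (AffineSubspace.mk' (0 : ℝ) ⊥).comap ℓ := by
    ext x
    simp [AffineSubspace.mem_mk']
  rw [hzeros]
  refine μ.addHaar_affineSubspace _ fun htop => hℓ (AffineMap.ext fun x => ?_)
  exact hzeros.superset (htop ▸ AffineSubspace.mem_top ℝ E x)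

theorem dense_forall_affineMap_ne_zero [Countable ι] {ℓ : ι → E →ᵃ[ℝ] ℝ} (hℓ : ∀ i, ℓ i ≠ 0) :
    Dense {x | ∀ i, ℓ i x ≠ 0} :=
  Measure.dense_of_ae (μ := Measure.addHaar) <| ae_all_iff.2 fun i =>
    measure_eq_zero_iff_ae_notMem.1 (addHaar_affineMap_zeros _ (hℓ i))

theorem exteriorConvexCover_signCell [Finite ι] {Ω : Set E} {ℓ : ι → E →ᵃ[ℝ] ℝ}
    (hΩ : frontier Ω ⊆ frontier (closure Ω)) (hℓ : ∀ i, ℓ i ≠ 0)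
    (hsub : frontier Ω ⊆ ⋃ i, {x | ℓ i x = 0}) :
    ExteriorConvexCover Ω (frontier Ω)
      (signCell ℓ '' {σ | (∀ i, σ i ≠ 0) ∧ (signCell ℓ σ ∩ (closure Ω)ᶜ).Nonempty}) where
  finite := (toFinite _).image _
  convex := forall_mem_image.2 fun σ _ => convex_signCell ℓ σ
  interior_nonempty := forall_mem_image.2 fun σ hσ => by
    rw [(isOpen_signCell ℓ hσ.1).interior_eq]
    exact hσ.2.mono inter_subset_left
  disjoint := forall_mem_image.2 fun σ hσ => by
    rw [disjoint_comm, disjoint_iff_inter_eq_empty, ← not_nonempty_iff_eq_empty]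
    intro hmeet
    obtain ⟨x, hx, hfr⟩ := inter_frontier_nonempty (convex_signCell ℓ σ).isPreconnected hmeet
      (hσ.2.mono (inter_subset_inter_right _ (compl_subset_compl.2 subset_closure)))
    obtain ⟨i, hi⟩ := mem_iUnion.1 (hsub hfr)
    exact hσ.1 i ((hx i).symm.trans (sign_eq_zero_iff.2 hi))
  subset_closure := by
    have hcells : (closure Ω)ᶜ ∩ {x | ∀ i, ℓ i x ≠ 0} ⊆
        ⋃ C ∈ signCell ℓ '' {σ | (∀ i, σ i ≠ 0) ∧ (signCell ℓ σ ∩ (closure Ω)ᶜ).Nonempty}, C := by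
      rintro x ⟨hx, hne⟩
      have hcell : x ∈ signCell ℓ fun i => SignType.sign (ℓ i x) := fun _ => rfl
      exact mem_biUnion (mem_image_of_mem _ ⟨fun i => sign_ne_zero.2 (hne i), x, hcell, hx⟩) hcell
    rw [← ((toFinite _).image _).closure_biUnion]
    calc frontier Ω ⊆ closure (closure Ω)ᶜ :=
          hΩ.trans (frontier_eq_closure_inter_closure.trans_subset inter_subset_right)
      _ ⊆ closure ((closure Ω)ᶜ ∩ {x | ∀ i, ℓ i x ≠ 0}) := closure_minimal
          ((dense_forall_affineMap_ne_zero hℓ).open_subset_closure_inter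
            isClosed_closure.isOpen_compl) isClosed_closure
      _ ⊆ _ := closure_mono hcells

end SignCell

section PolyhedralDomain

variable {n : ℕ}

theorem IsAffineHyperplane.exists_affineMap {H : Set (EuclideanSpace ℝ (Fin n))}
    (hH : IsAffineHyperplane H) :
    ∃ ℓ : EuclideanSpace ℝ (Fin n) →ᵃ[ℝ] ℝ, ℓ ≠ 0 ∧ H = {x | ℓ x = 0} := by
  obtain ⟨v, c, hv, rfl⟩ := hH
  refine ⟨(innerₛₗ ℝ v).toAffineMap - AffineMap.const ℝ _ c, fun h => hv ?_, ?_⟩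
  · have hzero : ∀ x, ⟪v, x⟫ - c = 0 := fun x => DFunLike.congr_fun h x
    have h0 := hzero 0
    have hvv := hzero v
    rw [inner_zero_right] at h0
    exact inner_self_eq_zero (𝕜 := ℝ).1 (by linarith)
  · ext x
    exact sub_eq_zero.symm

namespace IsPolyhedralDomain

variable {Ω : Set (EuclideanSpace ℝ (Fin n))} {𝓗 : Finset (Set (EuclideanSpace ℝ (Fin n)))}

theorem exists_affineMap (hΩ : IsPolyhedralDomain Ω 𝓗) :
    ∃ ℓ : 𝓗 → EuclideanSpace ℝ (Fin n) →ᵃ[ℝ] ℝ,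
      (∀ H, ℓ H ≠ 0) ∧ frontier Ω ⊆ ⋃ H, {x | ℓ H x = 0} := by
  choose ℓ hℓ hzeros using fun H : 𝓗 => (hΩ.hyperplane H H.2).exists_affineMap
  refine ⟨ℓ, hℓ, fun x hx => ?_⟩
  obtain ⟨H, hH, hxH⟩ := mem_iUnion₂.1 (hΩ.subset_union hx)
  exact mem_iUnion.2 ⟨⟨H, hH⟩, (hzeros ⟨H, hH⟩).subset hxH⟩

theorem volume_frontier (hΩ : IsPolyhedralDomain Ω 𝓗) : volume (frontier Ω) = 0 := by
  obtain ⟨ℓ, hℓ, hsub⟩ := hΩ.exists_affineMap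
  exact measure_mono_null hsub
    (measure_iUnion_null fun H => addHaar_affineMap_zeros volume (hℓ H))

theorem exists_exteriorConvexCover (hΩ : IsPolyhedralDomain Ω 𝓗) :
    ∃ 𝓒, ExteriorConvexCover Ω (polySingularSet Ω 𝓗) 𝓒 := by
  obtain ⟨ℓ, hℓ, hsub⟩ := hΩ.exists_affineMap
  exact ⟨_, (exteriorConvexCover_signCell hΩ.frontier_closure.subset hℓ hsub).mono fun _ hx => hx.1⟩

end IsPolyhedralDomain

end PolyhedralDomain

/-- Stability estimate for the Dirichlet problem on a bounded polyhedral domain: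
`‖u‖²_{K^1_1(Ω)} ≤ κ ‖Δu‖²_{K^0_{-1}(Ω)}` for functions vanishing on the boundary. -/
theorem dirichlet_stability_polyhedral {n : ℕ} (hn : 2 ≤ n)
    (Ω : Set (EuclideanSpace ℝ (Fin n))) (𝓗 : Finset (Set (EuclideanSpace ℝ (Fin n))))
    (hΩ : IsPolyhedralDomain Ω 𝓗) (hS : (polySingularSet Ω 𝓗).Nonempty) :
    ∃ κ : ℝ, 0 < κ ∧ ∀ u : EuclideanSpace ℝ (Fin n) → ℝ,
      (∃ U : Set (EuclideanSpace ℝ (Fin n)), IsOpen U ∧ closure Ω ⊆ U ∧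
        ContDiffOn ℝ 2 u U) →
      (∀ x ∈ frontier Ω, u x = 0) →
      (∫⁻ x in Ω, ENNReal.ofReal (u x ^ 2 / infDist x (polySingularSet Ω 𝓗) ^ 2)) +
          (∫⁻ x in Ω, ENNReal.ofReal (‖gradient u x‖ ^ 2)) ≤
        ENNReal.ofReal κ *
          ∫⁻ x in Ω, ENNReal.ofReal
            (infDist x (polySingularSet Ω 𝓗) ^ 2 * laplaceOp u x ^ 2) := by
  obtain ⟨𝓒, hcover⟩ := hΩ.exists_exteriorConvexCover
  exact dirichlet_stability_polyhedral_general hΩ.isOpen hΩ.isBounded hΩ.volume_frontier hS hcover
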